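/- Every connected weighted graph G on n vertices admits a subgraph H with at most C·n^{7/5}·log n edges (for a universal constant C) such that d_H(s,t) ≤ d_G(s,t) + 4·W(s,t) for every pair of vertices s,t ∈ V. -/

import Mathlib

open scoped ENNReal Classical

/-- The total weight of a walk: the sum of the weights of its edges. -/
noncomputable def walkWeight {V : Type} (G : SimpleGraph V) (w : Sym2 V → ℝ≥0∞)
    {s t : V} (p : G.Walk s t) : ℝ≥0∞ :=
  (p.edges.map w).sum

/-- Shortest-path distance in the weighted graph `(G, w)`, equal to `⊤` if there is no path. -/
noncomputable def gdist {V : Type} (G : SimpleGraph V) (w : Sym2 V → ℝ≥0∞)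
    (s t : V) : ℝ≥0∞ :=
  ⨅ p : G.Walk s t, walkWeight G w p

/-- The maximum edge weight along a walk (0 for the trivial walk). -/
noncomputable def maxEdge {V : Type} (G : SimpleGraph V) (w : Sym2 V → ℝ≥0∞)
    {s t : V} (p : G.Walk s t) : ℝ≥0∞ :=
  (p.edges.map w).foldr max 0

/-- `π` assigns to each ordered vertex pair a shortest path: a walk whose total
weight equals the shortest-path distance. -/
def IsShortestPathScheme {V : Type} (G : SimpleGraph V) (w : Sym2 V → ℝ≥0∞)
    (π : (s t : V) → G.Walk s t) : Prop :=
  ∀ s t : V, walkWeight G w (π s t) = gdist G w s t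

/-- The edge weights are positive and finite on all edges of `G`. -/
def PosWeights {V : Type} (G : SimpleGraph V) (w : Sym2 V → ℝ≥0∞) : Prop :=
  ∀ e ∈ G.edgeSet, 0 < w e ∧ w e ≠ ⊤

section Spanner

variable {V : Type} {G : SimpleGraph V} {w : Sym2 V → ℝ≥0∞}

lemma ww_nil (s : V) : walkWeight G w (SimpleGraph.Walk.nil : G.Walk s s) = 0 := by
  simp [walkWeight]

lemma ww_cons {s u t : V} (h : G.Adj s u) (p : G.Walk u t) :
    walkWeight G w (SimpleGraph.Walk.cons h p) = w s(s, u) + walkWeight G w p := by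
  simp [walkWeight]

lemma ww_append {s u t : V} (p : G.Walk s u) (q : G.Walk u t) :
    walkWeight G w (p.append q) = walkWeight G w p + walkWeight G w q := by
  simp [walkWeight]

lemma ww_reverse {s t : V} (p : G.Walk s t) :
    walkWeight G w p.reverse = walkWeight G w p := by
  simp [walkWeight, List.sum_reverse]

lemma gdist_le {s t : V} (p : G.Walk s t) : gdist G w s t ≤ walkWeight G w p :=
  iInf_le _ p

lemma gdist_le_of_edges {H : SimpleGraph V} {s t : V} (p : G.Walk s t)
    (h : ∀ e ∈ p.edges, e ∈ H.edgeSet) : gdist H w s t ≤ walkWeight G w p := by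
  refine (gdist_le (p.transfer H h)).trans ?_
  simp [walkWeight]

lemma gdist_comm (s t : V) : gdist G w s t = gdist G w t s := by
  apply le_antisymm
  · exact le_iInf fun p => (gdist_le p.reverse).trans (ww_reverse p).le
  · exact le_iInf fun p => (gdist_le p.reverse).trans (ww_reverse p).le

lemma gdist_triangle (s u t : V) : gdist G w s t ≤ gdist G w s u + gdist G w u t := by
  unfold gdist
  refine ENNReal.le_iInf_add_iInf fun p q => ?_
  exact (gdist_le (p.append q)).trans (ww_append p q).le

lemma le_maxEdge {s t : V} (p : G.Walk s t) {e : Sym2 V} (he : e ∈ p.edges) :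
    w e ≤ maxEdge G w p := by
  unfold maxEdge
  generalize p.edges = l at he
  induction l with
  | nil => simp at he
  | cons a l ih =>
    simp only [List.mem_cons] at he
    simp only [List.map_cons, List.foldr_cons]
    rcases he with rfl | he
    · exact le_max_left _ _
    · exact (ih he).trans (le_max_right _ _)

lemma ww_ne_top (hw : PosWeights G w) {s t : V} (p : G.Walk s t) : walkWeight G w p ≠ ⊤ := by
  induction p with
  | nil => simp [ww_nil]
  | cons h p ih =>
    rw [ww_cons]
    exact ENNReal.add_ne_top.2 ⟨(hw _ h).2, ih⟩

/-- Weight as an indexed sum. -/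
lemma ww_eq_sum {s t : V} (p : G.Walk s t) :
    walkWeight G w p = ∑ k ∈ Finset.range p.length, w s(p.getVert k, p.getVert (k+1)) := by
  induction p with
  | nil => simp [ww_nil]
  | cons h p ih =>
    rw [ww_cons, SimpleGraph.Walk.length_cons, Finset.sum_range_succ', ih, add_comm]
    simp

lemma ww_take {s t : V} (p : G.Walk s t) {i : ℕ} (hi : i ≤ p.length) :
    walkWeight G w (p.take i) = ∑ k ∈ Finset.range i, w s(p.getVert k, p.getVert (k+1)) := by
  rw [ww_eq_sum, SimpleGraph.Walk.take_length, min_eq_left hi]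
  refine Finset.sum_congr rfl fun k hk => ?_
  rw [Finset.mem_range] at hk
  rw [SimpleGraph.Walk.take_getVert, SimpleGraph.Walk.take_getVert, min_eq_right (by omega),
    min_eq_right (by omega)]

lemma ww_drop {s t : V} (p : G.Walk s t) (i : ℕ) :
    walkWeight G w (p.drop i)
      = ∑ k ∈ Finset.Ico i p.length, w s(p.getVert k, p.getVert (k+1)) := by
  rw [ww_eq_sum, SimpleGraph.Walk.drop_length, Finset.sum_Ico_eq_sum_range]
  refine Finset.sum_congr rfl fun k hk => ?_
  rw [SimpleGraph.Walk.drop_getVert, SimpleGraph.Walk.drop_getVert, add_assoc]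

/-- Shortcut inequality through a common neighbour. -/
lemma shortcut (hw : PosWeights G w) {s t : V} (p : G.Walk s t)
    (hp : walkWeight G w p = gdist G w s t) {i j : ℕ} (hij : i ≤ j) (hj : j ≤ p.length) {x : V}
    (h1 : G.Adj (p.getVert i) x) (h2 : G.Adj (p.getVert j) x) :
    ∑ k ∈ Finset.Ico i j, (w s(p.getVert k, p.getVert (k+1))).toReal ≤
      (w s(p.getVert i, x)).toReal + (w s(p.getVert j, x)).toReal := by
  have hfin : ∀ k < p.length, w s(p.getVert k, p.getVert (k+1)) ≠ ⊤ := fun k hk =>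
    (hw _ (p.adj_getVert_succ hk)).2
  have key : walkWeight G w p ≤ walkWeight G w (p.take i) +
      (w s(p.getVert i, x) + (w s(x, p.getVert j) + walkWeight G w (p.drop j))) := by
    rw [hp]
    refine (gdist_le ((p.take i).append (.cons h1 (.cons h2.symm (p.drop j))))).trans ?_
    rw [ww_append, ww_cons, ww_cons]
  rw [ww_take p (hij.trans hj), ww_drop p j, ww_eq_sum p, Finset.range_eq_Ico, Finset.range_eq_Ico,
    ← Finset.sum_Ico_consecutive _ (Nat.zero_le i) (hij.trans hj),
    ← Finset.sum_Ico_consecutive _ hij hj, Sym2.eq_swap (a := x)] at key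
  have f1 : ∑ k ∈ Finset.Ico 0 i, w s(p.getVert k, p.getVert (k+1)) ≠ ⊤ := by
    refine ENNReal.sum_ne_top.2 fun k hk => hfin k ?_
    rw [Finset.mem_Ico] at hk; omega
  have f3 : ∑ k ∈ Finset.Ico j p.length, w s(p.getVert k, p.getVert (k+1)) ≠ ⊤ := by
    refine ENNReal.sum_ne_top.2 fun k hk => hfin k ?_
    rw [Finset.mem_Ico] at hk; omega
  rw [ENNReal.add_le_add_iff_left f1, ← add_assoc, ENNReal.add_le_add_iff_right f3] at key
  have g1 := (hw s(p.getVert i, x) h1).2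
  have g2 := (hw s(p.getVert j, x) h2).2
  have := ENNReal.toReal_mono (ENNReal.add_ne_top.2 ⟨g1, g2⟩) key
  rw [ENNReal.toReal_add g1 g2, ENNReal.toReal_sum] at this
  · exact this
  · intro k hk
    rw [Finset.mem_Ico] at hk
    exact hfin k (by omega)

/-- The `d` lightest elements. -/
lemma exists_lightest {α : Type} (S : Finset α) (f : α → ℝ≥0∞) (d : ℕ) :
    ∃ T ⊆ S, T.card ≤ d ∧ ∀ u ∈ S, u ∉ T → T.card = d ∧ ∀ x ∈ T, f x ≤ f u := by
  induction d with
  | zero => exact ⟨∅, by simp, by simp, by simp⟩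
  | succ d ih =>
    obtain ⟨T, hTS, hT, h⟩ := ih
    by_cases hne : (S \ T).Nonempty
    · obtain ⟨m, hm, hmin⟩ := Finset.exists_min_image (S \ T) f hne
      rw [Finset.mem_sdiff] at hm
      refine ⟨insert m T, ?_, ?_, ?_⟩
      · exact Finset.insert_subset hm.1 hTS
      · rw [Finset.card_insert_of_notMem hm.2]; omega
      · intro u hu hu'
        rw [Finset.mem_insert, not_or] at hu'
        rw [Finset.card_insert_of_notMem hm.2]
        refine ⟨by rw [(h u hu hu'.2).1], ?_⟩
        intro x hx
        rw [Finset.mem_insert] at hx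
        rcases hx with rfl | hx
        · exact hmin u (by simp [hu, hu'.2])
        · exact (h u hu hu'.2).2 x hx
    · rw [Finset.not_nonempty_iff_eq_empty, Finset.sdiff_eq_empty_iff_subset] at hne
      refine ⟨T, hTS, by omega, fun u hu hnot => absurd (hne hu) hnot⟩

/-- Combinatorial counting lemma. -/
lemma block_count {α : Type} (d q : ℕ) (f : ℕ → ℕ) (M : ℕ)
    (hf : ∀ i j, i < j → j < 3 * q → f i < f j) (hM : ∀ i < 3 * q, f i < M)
    (c : ℕ → ℝ) (hc : ∀ i < M, 0 < c i) (A B : ℕ → Finset α) (U : Finset α)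
    (hA : ∀ i < 3 * q, d ≤ (A (f i)).card) (hB : ∀ i < 3 * q, d ≤ (B (f i)).card)
    (hAU : ∀ i < 3 * q, A (f i) ⊆ U) (hBU : ∀ i < 3 * q, B (f i) ⊆ U)
    (hAA : ∀ i j, i < j → j < 3 * q → ∀ x ∈ A (f i), x ∈ A (f j) →
      ∑ k ∈ Finset.Ico (f i + 1) (f j), c k ≤ c (f j))
    (hBB : ∀ i j, i < j → j < 3 * q → ∀ x ∈ B (f i), x ∈ B (f j) →
      ∑ k ∈ Finset.Ico (f i + 1) (f j), c k ≤ c (f i)) :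
    d * q ≤ 2 * U.card := by
  have two : ∀ a b k l, a < k → k < l → l < b → b ≤ M → c k + c l ≤ ∑ i ∈ Finset.Ico (a+1) b, c i := by
    intro a b k l h1 h2 h3 h4
    rw [← Finset.sum_pair (ne_of_lt h2)]
    refine Finset.sum_le_sum_of_subset_of_nonneg ?_ ?_
    · intro y hy
      simp only [Finset.mem_insert, Finset.mem_singleton] at hy
      rw [Finset.mem_Ico]; omega
    · intro i hi _
      rw [Finset.mem_Ico] at hi
      exact (hc i (by omega)).le
  set P : ℕ → Prop := fun j => c (f (3*j+1)) ≤ c (f (3*j)) with hP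
  set SA := (Finset.range q).filter P with hSA
  set SB := (Finset.range q).filter (fun j => ¬ P j) with hSB
  have cardAB : SA.card + SB.card = q := by
    rw [hSA, hSB, Finset.card_filter_add_card_filter_not, Finset.card_range]
  have dA : d * SA.card ≤ U.card := by
    have hd : (SA : Set ℕ).PairwiseDisjoint (fun j => A (f (3*j+1))) := by
      have main : ∀ i j, i ∈ SA → j ∈ SA → i < j → Disjoint (A (f (3*i+1))) (A (f (3*j+1))) := by
        intro i j hi hj hij
        rw [hSA, Finset.mem_filter, Finset.mem_range] at hi hj
        rw [Finset.disjoint_left]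
        intro x hx hx'
        have h1 := hAA (3*i+1) (3*j+1) (by omega) (by omega) x hx hx'
        have h2 := two (f (3*i+1)) (f (3*j+1)) (f (3*i+2)) (f (3*j)) (hf _ _ (by omega) (by omega))
          (hf _ _ (by omega) (by omega)) (hf _ _ (by omega) (by omega)) (hM _ (by omega)).le
        have h3 := hc (f (3*i+2)) (hM _ (by omega))
        have h4 : c (f (3*j+1)) ≤ c (f (3*j)) := hj.2
        linarith
      intro i hi j hj hij
      rcases lt_or_gt_of_ne hij with h | h
      · exact main i j hi hj h
      · exact (main j i hj hi h).symm
    have hsub : SA.biUnion (fun j => A (f (3*j+1))) ⊆ U := by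
      refine Finset.biUnion_subset.2 fun j hj => ?_
      rw [hSA, Finset.mem_filter, Finset.mem_range] at hj
      exact hAU _ (by omega)
    have := Finset.card_le_card hsub
    rw [Finset.card_biUnion hd] at this
    refine le_trans ?_ this
    rw [mul_comm]
    refine Finset.card_nsmul_le_sum _ _ _ fun j hj => ?_
    rw [hSA, Finset.mem_filter, Finset.mem_range] at hj
    exact hA _ (by omega)
  have dB : d * SB.card ≤ U.card := by
    have hd : (SB : Set ℕ).PairwiseDisjoint (fun j => B (f (3*j))) := by
      have main : ∀ i j, i ∈ SB → j ∈ SB → i < j → Disjoint (B (f (3*i))) (B (f (3*j))) := by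
        intro i j hi hj hij
        rw [hSB, Finset.mem_filter, Finset.mem_range] at hi hj
        rw [Finset.disjoint_left]
        intro x hx hx'
        have h1 := hBB (3*i) (3*j) (by omega) (by omega) x hx hx'
        have h2 := two (f (3*i)) (f (3*j)) (f (3*i+1)) (f (3*i+2)) (hf _ _ (by omega) (by omega))
          (hf _ _ (by omega) (by omega)) (hf _ _ (by omega) (by omega)) (hM _ (by omega)).le
        have h3 := hc (f (3*i+2)) (hM _ (by omega))
        have h4 : c (f (3*i)) < c (f (3*i+1)) := not_le.1 hi.2
        linarith
      intro i hi j hj hij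
      rcases lt_or_gt_of_ne hij with h | h
      · exact main i j hi hj h
      · exact (main j i hj hi h).symm
    have hsub : SB.biUnion (fun j => B (f (3*j))) ⊆ U := by
      refine Finset.biUnion_subset.2 fun j hj => ?_
      rw [hSB, Finset.mem_filter, Finset.mem_range] at hj
      exact hBU _ (by omega)
    have := Finset.card_le_card hsub
    rw [Finset.card_biUnion hd] at this
    refine le_trans ?_ this
    rw [mul_comm]
    refine Finset.card_nsmul_le_sum _ _ _ fun j hj => ?_
    rw [hSB, Finset.mem_filter, Finset.mem_range] at hj
    exact hB _ (by omega)
  calc d * q = d * SA.card + d * SB.card := by rw [← mul_add, cardAB]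
    _ ≤ 2 * U.card := by omega

/-- Hitting set lemma (union bound over random tuples). -/
lemma hitting_set {α ι : Type} [Fintype α] (F : Finset ι) (S : ι → Finset α) (k : ℝ) (m : ℕ)
    (hn : 0 < Fintype.card α)
    (hS : ∀ i ∈ F, k ≤ (S i).card)
    (hm : (F.card : ℝ) * Real.exp (-(k * m / Fintype.card α)) < 1) :
    ∃ R : Finset α, R.card ≤ m ∧ ∀ i ∈ F, ∃ r ∈ R, r ∈ S i := by
  set n := Fintype.card α with hndef
  have hn' : (0:ℝ) < n := by exact_mod_cast hn
  by_contra hcon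
  push Not at hcon
  have hcover : (Finset.univ : Finset (Fin m → α)) ⊆
      F.biUnion (fun i => Fintype.piFinset (fun _ : Fin m => (S i)ᶜ)) := by
    intro g _
    obtain ⟨i, hi, h⟩ := hcon (Finset.univ.image g)
      (Finset.card_image_le.trans (by simp))
    rw [Finset.mem_biUnion]
    refine ⟨i, hi, ?_⟩
    rw [Fintype.mem_piFinset]
    intro a
    rw [Finset.mem_compl]
    exact h _ (Finset.mem_image_of_mem _ (Finset.mem_univ a))
  have h1 := (Finset.card_le_card hcover).trans Finset.card_biUnion_le
  have h2 : ((n:ℝ))^m ≤ ∑ i ∈ F, ((n:ℝ) * Real.exp (-(k / n)))^m := by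
    have h1' : ((Finset.univ : Finset (Fin m → α)).card : ℝ) ≤
      ∑ i ∈ F, ((Fintype.piFinset (fun _ : Fin m => (S i)ᶜ)).card : ℝ) := by exact_mod_cast h1
    rw [Finset.card_univ, Fintype.card_fun, Fintype.card_fin] at h1'
    push_cast at h1'
    refine h1'.trans (Finset.sum_le_sum fun i hi => ?_)
    rw [Fintype.card_piFinset_const]
    push_cast
    refine pow_le_pow_left₀ (by positivity) ?_ m
    rw [Finset.card_compl, Nat.cast_sub (Finset.card_le_univ _)]
    have h3 := Real.add_one_le_exp (-(k / n))
    have h4 := hS i hi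
    calc (n:ℝ) - (S i).card ≤ n - k := by linarith
      _ = n * (-(k/n) + 1) := by field_simp; ring
      _ ≤ _ := by gcongr
  rw [Finset.sum_const, nsmul_eq_mul, mul_pow, ← Real.exp_nat_mul] at h2
  have h5 : (m:ℝ) * -(k / n) = -(k * m / n) := by ring
  rw [h5] at h2
  have h6 : (0:ℝ) < (n:ℝ)^m := by positivity
  nlinarith

/-- Shortest path tree. -/
lemma exists_tree [Fintype V] (hw : PosWeights G w)
    (π : (s t : V) → G.Walk s t) (hπ : IsShortestPathScheme G w π) (r : V) :
    ∃ T : Finset (Sym2 V), (∀ e ∈ T, e ∈ G.edgeSet) ∧ T.card ≤ Fintype.card V ∧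
      ∀ H : SimpleGraph V, (∀ e ∈ T, e ∈ H.edgeSet) → ∀ v, gdist H w r v ≤ gdist G w r v := by
  have hpar : ∀ v, v ≠ r → ∃ u, G.Adj u v ∧ gdist G w r u + w s(u, v) ≤ gdist G w r v := by
    intro v hv
    have h := hπ r v
    rw [← ww_reverse] at h
    cases hq : (π r v).reverse with
    | nil => exact absurd rfl hv
    | @cons _ u _ h1 q =>
      rw [hq, ww_cons] at h
      refine ⟨u, h1.symm, ?_⟩
      rw [← h, add_comm, Sym2.eq_swap, gdist_comm]
      gcongr
      exact gdist_le q
  choose! par hpar1 hpar2 using hpar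
  refine ⟨(Finset.univ.filter (fun v => v ≠ r)).image (fun v => s(par v, v)), ?_, ?_, ?_⟩
  · intro e he
    simp only [Finset.mem_image, Finset.mem_filter, Finset.mem_univ, true_and] at he
    obtain ⟨v, hv, rfl⟩ := he
    exact hpar1 v hv
  · exact Finset.card_image_le.trans (Finset.card_le_univ _)
  · intro H hH v
    have hwf : WellFounded (fun a b : V => gdist G w r a < gdist G w r b) := by
      have : IsTrans V (fun a b : V => gdist G w r a < gdist G w r b) := ⟨fun _ _ _ => lt_trans⟩
      have : Std.Irrefl (fun a b : V => gdist G w r a < gdist G w r b) := ⟨fun _ => lt_irrefl _⟩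
      exact Finite.wellFounded_of_trans_of_irrefl _
    induction v using hwf.induction with
    | _ v ih =>
      by_cases hv : v = r
      · subst hv
        refine (gdist_le (SimpleGraph.Walk.nil)).trans ?_
        rw [ww_nil]; exact zero_le
      · have hfin : gdist G w r (par v) ≠ ⊤ := by
          rw [← hπ]; exact ww_ne_top hw _
        have hlt : gdist G w r (par v) < gdist G w r v :=
          (ENNReal.lt_add_right hfin (hw _ (hpar1 v hv)).1.ne').trans_le (hpar2 v hv)
        refine le_trans ?_ (hpar2 v hv)
        refine (gdist_triangle r (par v) v).trans (add_le_add (ih _ hlt) ?_)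
        have hadj : H.Adj (par v) v := hH s(par v, v) (by
          simp only [Finset.mem_image, Finset.mem_filter, Finset.mem_univ, true_and]
          exact ⟨v, hv, rfl⟩)
        refine (gdist_le (SimpleGraph.Walk.cons hadj SimpleGraph.Walk.nil)).trans ?_
        rw [ww_cons, ww_nil, add_zero]

/-- Number of distinct edges of a walk outside `E`. -/
noncomputable def missing (E : Set (Sym2 V)) {s t : V} (p : G.Walk s t) : Finset (Sym2 V) :=
  p.edges.toFinset.filter (fun e => e ∉ E)

/-- Best walk with few missing edges. -/
lemma exists_best [Fintype V] (E : Set (Sym2 V)) (L : ℕ) (a b : V) :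
    ∃ T : Finset (Sym2 V), (∀ e ∈ T, e ∈ G.edgeSet) ∧ T.card ≤ L ∧
      ∀ H : SimpleGraph V, (∀ e ∈ T, e ∈ H.edgeSet) → (E ⊆ H.edgeSet) →
        ∀ p : G.Walk a b, (missing E p).card ≤ L → gdist H w a b ≤ walkWeight G w p := by
  set S : Finset (G.Path a b) := Finset.univ.filter (fun p => (missing E p.1).card ≤ L) with hS
  have hby : ∀ p : G.Walk a b, (missing E p).card ≤ L → (⟨p.bypass, p.bypass_isPath⟩ : G.Path a b) ∈ S := by
    intro p hp
    rw [hS, Finset.mem_filter]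
    refine ⟨Finset.mem_univ _, le_trans (Finset.card_le_card ?_) hp⟩
    intro e he
    simp only [missing, Finset.mem_filter, List.mem_toFinset] at he ⊢
    exact ⟨p.edges_bypass_subset_edges he.1, he.2⟩
  by_cases hne : S.Nonempty
  · obtain ⟨q, hq, hmin⟩ := Finset.exists_min_image S (fun p => walkWeight G w p.1) hne
    rw [hS, Finset.mem_filter] at hq
    refine ⟨missing E q.1, ?_, hq.2, ?_⟩
    · intro e he
      simp only [missing, Finset.mem_filter, List.mem_toFinset] at he
      exact q.1.edges_subset_edgeSet he.1
    · intro H hT hE p hp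
      have h1 : gdist H w a b ≤ walkWeight G w q.1 := by
        refine gdist_le_of_edges _ fun e he => ?_
        by_cases h : e ∈ E
        · exact hE h
        · exact hT e (by simp [missing, he, h])
      refine h1.trans ((hmin _ (hby p hp)).trans ?_)
      exact ((p.edges_bypass_sublist_edges).map w).sum_le_sum (fun _ _ => zero_le)
  · refine ⟨∅, by simp, by simp, ?_⟩
    intro H _ _ p hp
    exact absurd ⟨_, hby p hp⟩ hne

/-- Decomposition at the first missing edge. -/
lemma first_missing (E : Set (Sym2 V)) {s t : V} (p : G.Walk s t) (h : ∃ e ∈ p.edges, e ∉ E) :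
    ∃ (u v : V) (q1 : G.Walk s u) (hadj : G.Adj u v) (q2 : G.Walk v t),
      p = q1.append (.cons hadj q2) ∧ (∀ e ∈ q1.edges, e ∈ E) ∧ s(u, v) ∉ E := by
  induction p with
  | nil => simp at h
  | @cons a b c hab p ih =>
    by_cases hE : s(a, b) ∈ E
    · have : ∃ e ∈ p.edges, e ∉ E := by
        obtain ⟨e, he, he'⟩ := h
        rw [SimpleGraph.Walk.edges_cons, List.mem_cons] at he
        rcases he with rfl | he
        · exact absurd hE he'
        · exact ⟨e, he, he'⟩
      obtain ⟨u, v, q1, hadj, q2, h1, h2, h3⟩ := ih this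
      refine ⟨u, v, .cons hab q1, hadj, q2, by rw [h1]; rfl, ?_, h3⟩
      intro e he
      rw [SimpleGraph.Walk.edges_cons, List.mem_cons] at he
      rcases he with rfl | he
      · exact hE
      · exact h2 e he
    · exact ⟨a, b, .nil, hab, p, rfl, by simp, hE⟩

/-- Decomposition at the last missing edge. -/
lemma last_missing (E : Set (Sym2 V)) {s t : V} (p : G.Walk s t) (h : ∃ e ∈ p.edges, e ∉ E) :
    ∃ (u v : V) (q1 : G.Walk s u) (hadj : G.Adj u v) (q2 : G.Walk v t),
      p = q1.append (.cons hadj q2) ∧ (∀ e ∈ q2.edges, e ∈ E) ∧ s(u, v) ∉ E := by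
  obtain ⟨u, v, q1, hadj, q2, h1, h2, h3⟩ := first_missing E p.reverse (by simpa using h)
  refine ⟨v, u, q2.reverse, hadj.symm, q1.reverse, ?_, by simpa using h2, by rwa [Sym2.eq_swap]⟩
  rw [← p.reverse_reverse, h1]
  simp only [SimpleGraph.Walk.reverse_append, SimpleGraph.Walk.reverse_cons]
  rw [← SimpleGraph.Walk.append_assoc]
  rfl

lemma mem_edges_getVert {s t : V} (p : G.Walk s t) (e : Sym2 V) :
    e ∈ p.edges ↔ ∃ i < p.length, s(p.getVert i, p.getVert (i+1)) = e := by
  induction p with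
  | nil => simp
  | cons h p ih =>
    rw [SimpleGraph.Walk.edges_cons, List.mem_cons, ih, SimpleGraph.Walk.length_cons]
    constructor
    · rintro (rfl | ⟨i, hi, rfl⟩)
      · exact ⟨0, by omega, by simp⟩
      · exact ⟨i+1, by omega, by simp⟩
    · rintro ⟨i, hi, rfl⟩
      cases i with
      | zero => left; simp
      | succ i => right; exact ⟨i, by omega, by simp⟩

lemma many_missing [Fintype V] (hw : PosWeights G w) (d q : ℕ) (N : V → Finset V)
    (hN1 : ∀ v, ∀ x ∈ N v, G.Adj v x)
    (hN2 : ∀ v u, G.Adj v u → u ∉ N v → (N v).card = d ∧ ∀ x ∈ N v, w s(v, x) ≤ w s(v, u))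
    (E : Set (Sym2 V)) (hE : ∀ v, ∀ x ∈ N v, s(v, x) ∈ E)
    {s t : V} (p : G.Walk s t) (hp : walkWeight G w p = gdist G w s t)
    (hq : 3 * q ≤ (missing E p).card) :
    d * q ≤ 2 * (Finset.univ.filter
      (fun x => ∃ u ∈ p.support, G.Adj u x ∧ w s(u, x) ≤ maxEdge G w p)).card := by
  set I := (Finset.range p.length).filter (fun i => s(p.getVert i, p.getVert (i+1)) ∉ E) with hI
  have hcard : (missing E p).card ≤ I.card := by
    have : missing E p ⊆ I.image (fun i => s(p.getVert i, p.getVert (i+1))) := by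
      intro e he
      simp only [missing, Finset.mem_filter, List.mem_toFinset] at he
      obtain ⟨he, he'⟩ := he
      obtain ⟨i, hi, rfl⟩ := (mem_edges_getVert p e).1 he
      rw [Finset.mem_image]
      refine ⟨i, ?_, rfl⟩
      rw [hI, Finset.mem_filter, Finset.mem_range]
      exact ⟨hi, he'⟩
    exact (Finset.card_le_card this).trans Finset.card_image_le
  have hq' : 3 * q ≤ I.card := hq.trans hcard
  set f : ℕ → ℕ := fun i => if h : i < I.card then I.orderEmbOfFin rfl ⟨i, h⟩ else 0 with hf
  have hfI : ∀ i < 3 * q, f i ∈ I := by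
    intro i hi
    simp only [hf, dif_pos (hi.trans_le hq')]
    exact Finset.orderEmbOfFin_mem _ _ _
  have hflen : ∀ i < 3 * q, f i < p.length := by
    intro i hi
    have := hfI i hi
    rw [hI, Finset.mem_filter, Finset.mem_range] at this
    exact this.1
  have hfE : ∀ i < 3 * q, s(p.getVert (f i), p.getVert (f i+1)) ∉ E := by
    intro i hi
    have := hfI i hi
    rw [hI, Finset.mem_filter, Finset.mem_range] at this
    exact this.2
  have hfmono : ∀ i j, i < j → j < 3 * q → f i < f j := by
    intro i j hij hj
    simp only [hf, dif_pos (hj.trans_le hq'), dif_pos (hij.trans (hj.trans_le hq'))]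
    exact (I.orderEmbOfFin rfl).strictMono hij
  have hadj : ∀ i < 3 * q, G.Adj (p.getVert (f i)) (p.getVert (f i + 1)) := fun i hi =>
    p.adj_getVert_succ (hflen i hi)
  have hA : ∀ i < 3 * q, (N (p.getVert (f i))).card = d ∧ ∀ x ∈ N (p.getVert (f i)),
      w s(p.getVert (f i), x) ≤ w s(p.getVert (f i), p.getVert (f i + 1)) := by
    intro i hi
    exact hN2 _ _ (hadj i hi) fun h => hfE i hi (hE _ _ h)
  have hB : ∀ i < 3 * q, (N (p.getVert (f i + 1))).card = d ∧ ∀ x ∈ N (p.getVert (f i + 1)),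
      w s(p.getVert (f i + 1), x) ≤ w s(p.getVert (f i), p.getVert (f i + 1)) := by
    intro i hi
    rw [Sym2.eq_swap (a := p.getVert (f i))]
    exact hN2 _ _ (hadj i hi).symm fun h => hfE i hi (by rw [Sym2.eq_swap]; exact hE _ _ h)
  have hmax : ∀ i < 3 * q, w s(p.getVert (f i), p.getVert (f i + 1)) ≤ maxEdge G w p := by
    intro i hi
    apply le_maxEdge
    exact (mem_edges_getVert p _).2 ⟨_, hflen i hi, rfl⟩
  have hfin : ∀ i < 3 * q, w s(p.getVert (f i), p.getVert (f i + 1)) ≠ ⊤ := fun i hi =>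
    (hw _ (hadj i hi)).2
  refine block_count d q f p.length hfmono hflen
    (fun k => (w s(p.getVert k, p.getVert (k+1))).toReal) ?_
    (fun k => N (p.getVert k)) (fun k => N (p.getVert (k+1))) _ (fun i hi => (hA i hi).1.ge)
    (fun i hi => (hB i hi).1.ge) ?_ ?_ ?_ ?_
  · intro i hi
    have := hw s(p.getVert i, p.getVert (i+1)) (p.adj_getVert_succ hi)
    exact ENNReal.toReal_pos this.1.ne' this.2
  · intro i hi x hx
    rw [Finset.mem_filter]
    exact ⟨Finset.mem_univ _, _, p.getVert_mem_support _, hN1 _ _ hx,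
      ((hA i hi).2 x hx).trans (hmax i hi)⟩
  · intro i hi x hx
    rw [Finset.mem_filter]
    exact ⟨Finset.mem_univ _, _, p.getVert_mem_support _, hN1 _ _ hx,
      ((hB i hi).2 x hx).trans (hmax i hi)⟩
  · intro i j hij hj x hx hx'
    have hi := hij.trans hj
    have h := shortcut hw p hp (hfmono i j hij hj).le (hflen j hj).le (hN1 _ _ hx) (hN1 _ _ hx')
    rw [Finset.sum_eq_sum_Ico_succ_bot (hfmono i j hij hj)] at h
    have h1 := ENNReal.toReal_mono (hfin i hi) ((hA i hi).2 x hx)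
    have h2 := ENNReal.toReal_mono (hfin j hj) ((hA j hj).2 x hx')
    linarith
  · intro i j hij hj x hx hx'
    have hi := hij.trans hj
    have h := shortcut hw p hp (Nat.succ_le_succ (hfmono i j hij hj).le) (hflen j hj)
      (hN1 _ _ hx) (hN1 _ _ hx')
    rw [Finset.sum_Ico_succ_top (hfmono i j hij hj)] at h
    have h1 := ENNReal.toReal_mono (hfin i hi) ((hB i hi).2 x hx)
    have h2 := ENNReal.toReal_mono (hfin j hj) ((hB j hj).2 x hx')
    linarith

lemma core [Fintype V] (hn : 0 < Fintype.card V) (hw : PosWeights G w)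
    (π : (s t : V) → G.Walk s t) (hπ : IsShortestPathScheme G w π) (d l m1 m2 : ℕ)
    (h1 : ((Fintype.card V : ℝ) * Fintype.card V) *
      Real.exp (-(((d * l : ℕ) : ℝ) * m1 / Fintype.card V)) < 1)
    (h2 : (Fintype.card V : ℝ) * Real.exp (-((d : ℝ) * m2 / Fintype.card V)) < 1) :
    ∃ H : SimpleGraph V, H ≤ G ∧
      H.edgeSet.ncard ≤ Fintype.card V * d + m1 * Fintype.card V + m2 * m2 * (6 * l) ∧
      ∀ s t : V, gdist H w s t ≤ gdist G w s t + 4 * maxEdge G w (π s t) := by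
  set n := Fintype.card V with hndef
  -- light neighbours
  have hNex : ∀ v : V, ∃ T : Finset V, (∀ x ∈ T, G.Adj v x) ∧ T.card ≤ d ∧
      ∀ u, G.Adj v u → u ∉ T → T.card = d ∧ ∀ x ∈ T, w s(v, x) ≤ w s(v, u) := by
    intro v
    obtain ⟨T, hT, hc, h⟩ := exists_lightest (Finset.univ.filter (G.Adj v)) (fun x => w s(v, x)) d
    refine ⟨T, fun x hx => by simpa using hT hx, hc, fun u hu hu' => h u (by simpa using hu) hu'⟩
  choose N hN1 hNc hN2 using hNex
  set E0 : Finset (Sym2 V) := Finset.univ.biUnion (fun v => (N v).image (fun x => s(v, x))) with hE0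
  have hE0mem : ∀ v, ∀ x ∈ N v, s(v, x) ∈ (E0 : Set (Sym2 V)) := by
    intro v x hx
    rw [hE0, Finset.mem_coe, Finset.mem_biUnion]
    exact ⟨v, Finset.mem_univ _, Finset.mem_image_of_mem _ hx⟩
  have hE0card : E0.card ≤ n * d := by
    refine Finset.card_biUnion_le.trans ?_
    refine (Finset.sum_le_card_nsmul _ _ d fun v _ => Finset.card_image_le.trans (hNc v)).trans ?_
    rw [Finset.card_univ, smul_eq_mul]
  have hE0G : ∀ e ∈ E0, e ∈ G.edgeSet := by
    intro e he
    rw [hE0, Finset.mem_biUnion] at he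
    obtain ⟨v, _, he⟩ := he
    rw [Finset.mem_image] at he
    obtain ⟨x, hx, rfl⟩ := he
    exact hN1 v x hx
  -- hitting set for long paths
  set U : V × V → Finset V := fun st => Finset.univ.filter (fun x => ∃ u ∈ (π st.1 st.2).support,
    G.Adj u x ∧ w s(u, x) ≤ maxEdge G w (π st.1 st.2)) with hU
  obtain ⟨R1, hR1c, hR1⟩ := hitting_set
    (Finset.univ.filter (fun st : V × V => d * l ≤ (U st).card)) U ((d * l : ℕ) : ℝ) m1 hn
    (fun i hi => by
      rw [Finset.mem_filter] at hi
      exact_mod_cast hi.2)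
    (lt_of_le_of_lt (by
      gcongr
      have : (Finset.univ.filter (fun st : V × V => d * l ≤ (U st).card)).card ≤ n * n :=
        (Finset.card_le_univ _).trans (by rw [Fintype.card_prod])
      exact_mod_cast this) h1)
  obtain ⟨R2, hR2c, hR2⟩ := hitting_set
    (Finset.univ.filter (fun v : V => d ≤ (N v).card)) N (d : ℝ) m2 hn
    (fun i hi => by
      rw [Finset.mem_filter] at hi
      exact_mod_cast hi.2)
    (lt_of_le_of_lt (by
      gcongr
      exact Finset.card_le_univ _) h2)
  choose T hTG hTc hT using fun r => exists_tree hw π hπ r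
  choose B hBG hBc hB using fun ab : V × V =>
    exists_best (G := G) (w := w) (E0 : Set (Sym2 V)) (6 * l) ab.1 ab.2
  set F : Finset (Sym2 V) := (E0 ∪ R1.biUnion T) ∪ (R2 ×ˢ R2).biUnion B with hF
  have hFG : ∀ e ∈ F, e ∈ G.edgeSet := by
    intro e he
    simp only [hF, Finset.mem_union, Finset.mem_biUnion] at he
    rcases he with (he | ⟨r, _, he⟩) | ⟨r, _, he⟩
    · exact hE0G e he
    · exact hTG r e he
    · exact hBG r e he
  have hFcard : F.card ≤ n * d + m1 * n + m2 * m2 * (6 * l) := by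
    refine (Finset.card_union_le _ _).trans (add_le_add
      ((Finset.card_union_le _ _).trans (add_le_add hE0card ?_)) ?_)
    · refine Finset.card_biUnion_le.trans
        ((Finset.sum_le_card_nsmul _ _ n fun v _ => hTc v).trans ?_)
      rw [smul_eq_mul]; gcongr
    · refine Finset.card_biUnion_le.trans
        ((Finset.sum_le_card_nsmul _ _ (6 * l) fun v _ => hBc v).trans ?_)
      rw [smul_eq_mul, Finset.card_product]; gcongr
  set H := SimpleGraph.fromEdgeSet (F : Set (Sym2 V)) with hH
  have hHe : H.edgeSet = F := by
    rw [hH, SimpleGraph.edgeSet_fromEdgeSet]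
    apply Set.Subset.antisymm Set.sdiff_subset
    intro e he
    exact ⟨he, G.not_isDiag_of_mem_edgeSet (hFG e he)⟩
  have hE0H : (E0 : Set (Sym2 V)) ⊆ H.edgeSet := by
    rw [hHe]
    intro e he
    simp only [hF, Finset.mem_coe, Finset.mem_union]
    exact Or.inl (Or.inl he)
  refine ⟨H, ?_, ?_, ?_⟩
  · rw [← SimpleGraph.edgeSet_subset_edgeSet, hHe]
    exact fun e he => hFG e he
  · rw [hHe, Set.ncard_coe_finset]; exact hFcard
  intro s t
  rw [← hπ s t]
  by_cases hlong : 6 * l ≤ (missing (E0 : Set (Sym2 V)) (π s t)).card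
  · have h3 := many_missing hw d (2 * l) N hN1 hN2 (E0 : Set (Sym2 V)) hE0mem (π s t) (hπ s t)
      (by omega)
    have h4 : d * l ≤ (U (s, t)).card := by
      have h5 : d * (2 * l) ≤ 2 * (U (s, t)).card := h3
      nlinarith
    obtain ⟨r, hr, hrU⟩ := hR1 (s, t) (by simpa using h4)
    simp only [hU, Finset.mem_filter, Finset.mem_univ, true_and] at hrU
    obtain ⟨u, hu, hadj, hle⟩ := hrU
    have hTr := hT r H (fun e he => by
      rw [hHe]
      simp only [hF, Finset.mem_coe, Finset.mem_union, Finset.mem_biUnion]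
      exact Or.inl (Or.inr ⟨r, hr, he⟩))
    obtain ⟨q1, q2, hq⟩ := SimpleGraph.Walk.mem_support_iff_exists_append.1 hu
    have hsr : gdist G w r s ≤ walkWeight G w q1 + w s(u, r) := by
      rw [gdist_comm]
      refine (gdist_le (q1.append (.cons hadj .nil))).trans ?_
      rw [ww_append, ww_cons, ww_nil, add_zero]
    have hrt : gdist G w r t ≤ w s(u, r) + walkWeight G w q2 := by
      refine (gdist_le (.cons hadj.symm q2)).trans ?_
      rw [ww_cons, Sym2.eq_swap]
    calc gdist H w s t ≤ gdist H w s r + gdist H w r t := gdist_triangle _ _ _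
      _ ≤ gdist G w r s + gdist G w r t := by
          rw [gdist_comm s r]; exact add_le_add (hTr s) (hTr t)
      _ ≤ (walkWeight G w q1 + w s(u, r)) + (w s(u, r) + walkWeight G w q2) := add_le_add hsr hrt
      _ = (walkWeight G w q1 + walkWeight G w q2) + 2 * w s(u, r) := by ring
      _ = walkWeight G w (π s t) + 2 * w s(u, r) := by rw [← ww_append, ← hq]
      _ ≤ _ := by gcongr; norm_num
  · push Not at hlong
    by_cases hmiss : ∃ e ∈ (π s t).edges, e ∉ (E0 : Set (Sym2 V))
    · obtain ⟨u, v, q1, hadj, q2, hq, hq1, huv⟩ := first_missing _ _ hmiss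
      obtain ⟨u', v', q3, hadj', q4, hq', hq4, huv'⟩ :=
        last_missing (E0 : Set (Sym2 V)) (SimpleGraph.Walk.cons hadj q2) ⟨s(u, v), by simp, huv⟩
      have hNu := hN2 u v hadj (fun h => huv (hE0mem _ _ h))
      have hNv := hN2 v' u' hadj'.symm (fun h => huv' (by rw [Sym2.eq_swap]; exact hE0mem _ _ h))
      obtain ⟨a, ha, haN⟩ := hR2 u (by simp [hNu.1])
      obtain ⟨b, hb, hbN⟩ := hR2 v' (by simp [hNv.1])
      have hmu : w s(u, a) ≤ maxEdge G w (π s t) :=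
        (hNu.2 a haN).trans (le_maxEdge _ (by rw [hq]; simp))
      have hmv : w s(v', b) ≤ maxEdge G w (π s t) := by
        refine (hNv.2 b hbN).trans (le_maxEdge _ ?_)
        rw [hq, hq', Sym2.eq_swap]; simp
      set M : G.Walk u v' := q3.append (.cons hadj' .nil) with hM
      have hpM : walkWeight G w (π s t) = walkWeight G w q1 + (walkWeight G w M + walkWeight G w q4) := by
        rw [hq, ww_append, hq', ww_append, hM, ww_append, ww_cons, ww_cons, ww_nil]; ring
      have hBab := hB (a, b) H (fun e he => by
        rw [hHe]
        simp only [hF, Finset.mem_coe, Finset.mem_union, Finset.mem_biUnion]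
        exact Or.inr ⟨(a, b), Finset.mem_product.2 ⟨ha, hb⟩, he⟩) hE0H
        (.cons (hN1 u a haN).symm (M.append (.cons (hN1 v' b hbN) .nil))) (by
          refine le_trans (Finset.card_le_card ?_) hlong.le
          intro e he
          simp only [missing, Finset.mem_filter, List.mem_toFinset, SimpleGraph.Walk.edges_cons,
            SimpleGraph.Walk.edges_append, List.mem_cons, List.mem_append,
            SimpleGraph.Walk.edges_nil, List.not_mem_nil, or_false, hM] at he ⊢
          obtain ⟨he, heE⟩ := he
          refine ⟨?_, heE⟩
          rcases he with rfl | (he | rfl) | rfl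
          · exact absurd (by rw [Sym2.eq_swap]; exact hE0mem _ _ haN) heE
          · rw [hq, hq']; simp [he]
          · rw [hq, hq']; simp
          · exact absurd (hE0mem _ _ hbN) heE)
      rw [ww_cons, ww_append, ww_cons, ww_nil, add_zero, Sym2.eq_swap] at hBab
      have e1 : gdist H w s a ≤ walkWeight G w q1 + w s(u, a) := by
        refine (gdist_le_of_edges (q1.append (.cons (hN1 u a haN) .nil)) ?_).trans ?_
        · intro e he
          apply hE0H
          simp only [SimpleGraph.Walk.edges_cons,
            SimpleGraph.Walk.edges_append, List.mem_cons, List.mem_append,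
            SimpleGraph.Walk.edges_nil, List.not_mem_nil, or_false] at he
          rcases he with he | rfl
          · exact hq1 e he
          · exact hE0mem _ _ haN
        · rw [ww_append, ww_cons, ww_nil, add_zero]
      have e2 : gdist H w b t ≤ w s(v', b) + walkWeight G w q4 := by
        refine (gdist_le_of_edges (.cons (hN1 v' b hbN).symm q4) ?_).trans ?_
        · intro e he
          apply hE0H
          simp only [SimpleGraph.Walk.edges_cons, List.mem_cons] at he
          rcases he with rfl | he
          · rw [Sym2.eq_swap]; exact hE0mem _ _ hbN
          · exact hq4 e he
        · rw [ww_cons, Sym2.eq_swap]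
      calc gdist H w s t ≤ gdist H w s a + (gdist H w a b + gdist H w b t) :=
            (gdist_triangle s a t).trans (by gcongr; exact gdist_triangle a b t)
        _ ≤ (walkWeight G w q1 + w s(u, a)) + ((w s(u, a) + (walkWeight G w M + w s(v', b))) +
            (w s(v', b) + walkWeight G w q4)) := add_le_add e1 (add_le_add hBab e2)
        _ = walkWeight G w (π s t) + (2 * w s(u, a) + 2 * w s(v', b)) := by rw [hpM]; ring
        _ ≤ walkWeight G w (π s t) + (2 * maxEdge G w (π s t) + 2 * maxEdge G w (π s t)) := by
            gcongr
        _ = _ := by ring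
    · push Not at hmiss
      refine (gdist_le_of_edges (π s t) fun e he => hE0H (hmiss e he)).trans ?_
      exact le_self_add

end Spanner

/-- Every connected weighted graph `G` on `n` vertices admits a subgraph `H`
on at most `C·n^(7/5)·log n` edges (for a universal constant `C`) such that
`d_H(s,t) ≤ d_G(s,t) + 4·W(s,t)` for every pair of vertices `s, t`. -/
theorem allpairs_four_W_spanner :
    ∃ C : ℝ, 0 < C ∧
      ∀ (V : Type) [Fintype V] (G : SimpleGraph V) (w : Sym2 V → ℝ≥0∞),
        G.Connected → PosWeights G w →
        ∀ π : (s t : V) → G.Walk s t, IsShortestPathScheme G w π →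
          ∃ H : SimpleGraph V, H ≤ G ∧
            (H.edgeSet.ncard : ℝ) ≤
              C * (Fintype.card V : ℝ) ^ ((7 : ℝ) / 5) * Real.log (Fintype.card V) ∧
            ∀ s t : V,
              gdist H w s t ≤ gdist G w s t + 4 * maxEdge G w (π s t) := by

  refine ⟨400, by norm_num, ?_⟩
  intro V _ G w hconn hw π hπ
  have hn : 0 < Fintype.card V := Fintype.card_pos_iff.2 hconn.nonempty
  rcases Nat.lt_or_ge 1 (Fintype.card V) with hn2 | hn1
  · set n := Fintype.card V with hndef
    set a : ℝ := (n : ℝ) ^ ((1 : ℝ) / 5) with ha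
    have hnpos : (0 : ℝ) < n := by exact_mod_cast hn
    have hn2' : (2 : ℝ) ≤ n := by exact_mod_cast hn2
    have ha5 : (n : ℝ) = a ^ 5 := by
      rw [ha, ← Real.rpow_natCast, ← Real.rpow_mul hnpos.le]; norm_num
    have ha7 : (n : ℝ) ^ ((7 : ℝ) / 5) = a ^ 7 := by
      rw [ha, ← Real.rpow_natCast, ← Real.rpow_mul hnpos.le]; norm_num
    have ha1 : 1 ≤ a := Real.one_le_rpow (by linarith) (by norm_num)
    have ha0 : 0 < a := by linarith
    set lam := Real.log n with hlam
    have hlam2 : 1 / 2 ≤ lam := by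
      have h1 : Real.log 2 ≤ lam := Real.log_le_log (by norm_num) hn2'
      have := Real.log_two_gt_d9
      linarith
    have hexp : Real.exp (-(3 * lam)) = 1 / (n : ℝ) ^ 3 := by
      rw [Real.exp_neg, show 3 * lam = ((3 : ℕ) : ℝ) * lam by norm_num, Real.exp_nat_mul, hlam,
        Real.exp_log hnpos, one_div]
    have hd := Nat.le_ceil (a ^ 2 * lam)
    have hd' := Nat.ceil_lt_add_one (a := a ^ 2 * lam) (by positivity)
    have hl := Nat.le_ceil a
    have hl' := Nat.ceil_lt_add_one (a := a) (by positivity)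
    have hm := Nat.le_ceil (3 * a ^ 2)
    have hm' := Nat.ceil_lt_add_one (a := 3 * a ^ 2) (by positivity)
    have hk := Nat.le_ceil (3 * a ^ 3)
    have hk' := Nat.ceil_lt_add_one (a := 3 * a ^ 3) (by positivity)
    obtain ⟨H, hHG, hHc, hHd⟩ := core hn hw π hπ ⌈a ^ 2 * lam⌉₊ ⌈a⌉₊ ⌈3 * a ^ 2⌉₊ ⌈3 * a ^ 3⌉₊
      (by
        have : 3 * lam ≤ ((⌈a ^ 2 * lam⌉₊ * ⌈a⌉₊ : ℕ) : ℝ) * ⌈3 * a ^ 2⌉₊ / n := by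
          rw [le_div_iff₀ hnpos, ha5]
          push_cast
          calc 3 * lam * a ^ 5 = (a ^ 2 * lam) * a * (3 * a ^ 2) := by ring
            _ ≤ _ := by gcongr
        calc (n : ℝ) * n * Real.exp (-(((⌈a ^ 2 * lam⌉₊ * ⌈a⌉₊ : ℕ) : ℝ) * ⌈3 * a ^ 2⌉₊ / n))
            ≤ (n : ℝ) * n * Real.exp (-(3 * lam)) := by gcongr
          _ = 1 / n := by rw [hexp]; field_simp
          _ < 1 := by rw [div_lt_one hnpos]; linarith)
      (by
        have : 3 * lam ≤ (⌈a ^ 2 * lam⌉₊ : ℝ) * ⌈3 * a ^ 3⌉₊ / n := by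
          rw [le_div_iff₀ hnpos, ha5]
          calc 3 * lam * a ^ 5 = (a ^ 2 * lam) * (3 * a ^ 3) := by ring
            _ ≤ _ := by gcongr
        calc (n : ℝ) * Real.exp (-((⌈a ^ 2 * lam⌉₊ : ℝ) * ⌈3 * a ^ 3⌉₊ / n))
            ≤ (n : ℝ) * Real.exp (-(3 * lam)) := by gcongr
          _ = 1 / (n : ℝ) ^ 2 := by rw [hexp]; field_simp
          _ < 1 := by rw [div_lt_one (by positivity)]; nlinarith)
    refine ⟨H, hHG, ?_, hHd⟩
    rw [ha7]
    have hHc' : (H.edgeSet.ncard : ℝ) ≤ n * ⌈a ^ 2 * lam⌉₊ + ⌈3 * a ^ 2⌉₊ * n +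
        ⌈3 * a ^ 3⌉₊ * ⌈3 * a ^ 3⌉₊ * (6 * ⌈a⌉₊) := by exact_mod_cast hHc
    have ha2 : 1 ≤ a ^ 2 := one_le_pow₀ ha1
    have ha3 : 1 ≤ a ^ 3 := one_le_pow₀ ha1
    have t1 : (n : ℝ) * ⌈a ^ 2 * lam⌉₊ ≤ a ^ 5 * (a ^ 2 * lam + a ^ 2) := by
      rw [ha5]; gcongr; linarith
    have t2 : (⌈3 * a ^ 2⌉₊ : ℝ) * n ≤ (4 * a ^ 2) * a ^ 5 := by
      rw [ha5]; gcongr; linarith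
    have t3 : (⌈3 * a ^ 3⌉₊ : ℝ) * ⌈3 * a ^ 3⌉₊ * (6 * ⌈a⌉₊) ≤
        (4 * a ^ 3) * (4 * a ^ 3) * (6 * (2 * a)) := by
      gcongr <;> linarith
    have t4 : a ^ 7 * (1 / 2) ≤ a ^ 7 * lam := by gcongr
    nlinarith
  · have hc : Fintype.card V = 1 := by omega
    have hsub : Subsingleton V := Fintype.card_le_one_iff_subsingleton.1 hc.le
    refine ⟨⊥, bot_le, ?_, ?_⟩
    · simp [hc]
    · intro s t
      obtain rfl := Subsingleton.elim s t
      refine (gdist_le SimpleGraph.Walk.nil).trans ?_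
      rw [ww_nil]
      exact zero_le
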